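/- arXiv:2102.05355 — 3 statements merged into one kernel-verified Lean document; each statement's English description precedes it below -/
import Mathlib

section
/- Let $d$ be a positive integer, let $p_2 \geq 3$ be an odd integer, and let $n$ be a non-negative integer. Then $A_{2,p_2}(n) \equiv B_{2,p_2}(n) \pmod{2}$, i.e., the number of partitions of $n$ into $d$-th powers of integers divisible by neither $2$ nor $p_2$ is congruent modulo $2$ to the number of partitions of $n$ into distinct colored $d$-th powers of integers not divisible by $p_2$, where each part carries one of $2^d-1$ colors. -/
/-- `A d p₁ p₂ n`: the number of partitions of `n` all of whose parts are of the form `k ^ d`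
with `k` a positive integer divisible by neither `p₁` nor `p₂`, represented as multisets of
the bases `k`. -/
noncomputable def A (d p₁ p₂ n : ℕ) : ℕ :=
  Nat.card {s : Multiset ℕ //
    (∀ k ∈ s, 0 < k ∧ ¬ p₁ ∣ k ∧ ¬ p₂ ∣ k) ∧ (s.map (· ^ d)).sum = n}

/-- `B d p₁ p₂ n`: the number of partitions of `n` into distinct colored `d`-th powers of
positive integers not divisible by `p₂`, each part carrying one of `p₁ ^ d - 1` colors;
represented as finite sets of pairs (base, color). -/
noncomputable def B (d p₁ p₂ n : ℕ) : ℕ :=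
  Nat.card {s : Finset (ℕ × ℕ) //
    (∀ x ∈ s, 0 < x.1 ∧ ¬ p₂ ∣ x.1 ∧ 1 ≤ x.2 ∧ x.2 ≤ p₁ ^ d - 1) ∧
    (s.sum fun x => x.1 ^ d) = n}

/-!
Write the multiplicities of an odd-part partition in binary: its parts `m ^ d` become distinct
summands `2 ^ j * m ^ d`. Dividing `j = d * a + i` by `d` turns such a summand into
`2 ^ i * (2 ^ a * m) ^ d`, so `A d 2 p₂ n` is exactly the number of sets of pairs `(k, i)`
with `p₂ ∤ k` and `i < d`, weighted by `2 ^ i * k ^ d`. Modulo 2, the labels `i < d` with these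
weights can be traded for `2 ^ d - 1` colors of weight `k ^ d` each, because
`∏ i < d, (1 + Y ^ 2 ^ i) = (1 + Y) ^ (2 ^ d - 1)` in characteristic 2.
-/

open Finset Polynomial

section Counts

variable {ι κ : Type*}

/-- The number of partitions of `n` with parts labelled by `P`, repetitions allowed, where the part
labelled `i` has size `w i`. It is `0` when there are infinitely many such partitions. -/
noncomputable def multisetCount (P : Set ι) (w : ι → ℕ) (n : ℕ) : ℕ :=
  {s : Multiset ι | (∀ i ∈ s, i ∈ P) ∧ (s.map w).sum = n}.ncard

/-- The number of partitions of `n` with distinctly labelled parts, the labels being taken from `P`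
and the part labelled `i` having size `w i`. It is `0` when there are infinitely many such
partitions. -/
noncomputable def finsetCount (P : Set ι) (w : ι → ℕ) (n : ℕ) : ℕ :=
  {s : Finset ι | (s : Set ι) ⊆ P ∧ ∑ i ∈ s, w i = n}.ncard

theorem finsetCount_eq_of_bijOn {P : Set ι} {Q : Set κ} {v : ι → ℕ} {w : κ → ℕ} {f : ι → κ}
    (hf : Set.BijOn f P Q) (hw : ∀ i ∈ P, w (f i) = v i) (n : ℕ) :
    finsetCount P v n = finsetCount Q w n := by
  classical
  have sum_image {s : Finset ι} (hs : (s : Set ι) ⊆ P) : ∑ k ∈ s.image f, w k = ∑ i ∈ s, v i := by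
    rw [Finset.sum_image (hf.injOn.mono hs)]
    exact Finset.sum_congr rfl fun i hi ↦ hw i (hs hi)
  refine Set.BijOn.ncard_eq (f := Finset.image f) ⟨?_, ?_, ?_⟩
  · rintro s ⟨hs, rfl⟩
    refine ⟨?_, sum_image hs⟩
    rw [coe_image]
    exact (Set.image_mono hs).trans hf.mapsTo.image_subset
  · rintro s ⟨hs, -⟩ t ⟨ht, -⟩ hst
    rw [← coe_inj, ← hf.injOn.image_eq_image_iff hs ht, ← coe_image, ← coe_image]
    exact congrArg _ hst
  · rintro t ⟨ht, rfl⟩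
    rw [← hf.image_eq] at ht
    obtain ⟨s, hs, rfl⟩ := subset_set_image_iff.1 ht
    exact ⟨s, ⟨hs, (sum_image hs).symm⟩, rfl⟩

theorem finsetCount_eq_of_subset {P Q : Set ι} {w : ι → ℕ} {n : ℕ} (hQP : Q ⊆ P)
    (hQ : ∀ i ∈ P, w i ≤ n → i ∈ Q) : finsetCount P w n = finsetCount Q w n := by
  refine congrArg Set.ncard (Set.ext fun s ↦ and_congr_left fun hs ↦ ⟨fun hP i hi ↦ ?_, hQP.trans'⟩)
  exact hQ i (hP hi) (hs ▸ single_le_sum (f := w) (fun _ _ ↦ Nat.zero_le _) hi)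

theorem finsetCount_prod_eq_sep_prod {P : Set ι} {w : ι → ℕ} {v : ι × κ → ℕ}
    (hv : ∀ x, w x.1 ≤ v x) (C : Set κ) (n : ℕ) :
    finsetCount (P ×ˢ C) v n = finsetCount ({i ∈ P | w i ≤ n} ×ˢ C) v n :=
  finsetCount_eq_of_subset (Set.prod_mono_left (Set.sep_subset P _)) fun x hx hxn ↦
    ⟨⟨hx.1, (hv x).trans hxn⟩, hx.2⟩

theorem coeff_prod_one_add_X_pow (R : Type*) [CommSemiring R] (s : Finset ι) (w : ι → ℕ) (n : ℕ) :
    (∏ i ∈ s, (1 + X ^ w i : R[X])).coeff n = finsetCount (s : Set ι) w n := by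
  have hcount : finsetCount (s : Set ι) w n = #{t ∈ s.powerset | ∑ i ∈ t, w i = n} := by
    rw [finsetCount, ← Set.ncard_coe_finset]
    congr 1 with t
    simp
  calc (∏ i ∈ s, (1 + X ^ w i : R[X])).coeff n
      = ∑ t ∈ s.powerset, (X ^ ∑ i ∈ t, w i : R[X]).coeff n := by
        simp only [prod_one_add, finsetSum_coeff, prod_pow_eq_pow_sum]
    _ = finsetCount (s : Set ι) w n := by
        simp only [hcount, coeff_X_pow, eq_comm (a := n), natCast_card_filter]

end Counts

section BinaryExpansion

variable {ι : Type*}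

/-- The multiset in which `i` has multiplicity `∑ 2 ^ j`, summed over the `j` with `(i, j) ∈ s`:
the binary digits of the multiplicities are recorded by `s`. -/
def multisetOfBits (s : Finset (ι × ℕ)) : Multiset ι :=
  ∑ x ∈ s, 2 ^ x.2 • {x.1}

theorem mem_multisetOfBits {s : Finset (ι × ℕ)} {i : ι} :
    i ∈ multisetOfBits s ↔ ∃ x ∈ s, x.1 = i := by
  simp [multisetOfBits, Multiset.mem_sum, Multiset.mem_nsmul, eq_comm]

theorem sum_map_multisetOfBits (s : Finset (ι × ℕ)) (w : ι → ℕ) :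
    ((multisetOfBits s).map w).sum = ∑ x ∈ s, 2 ^ x.2 * w x.1 := by
  rw [multisetOfBits, ← Multiset.coe_mapAddMonoidHom, ← Multiset.coe_sumAddMonoidHom, map_sum,
    map_sum]
  simp [Multiset.map_nsmul, Multiset.sum_nsmul]

theorem count_multisetOfBits [DecidableEq ι] (s : Finset (ι × ℕ)) (i : ι) :
    (multisetOfBits s).count i =
      ∑ j ∈ s.preimage (Prod.mk i) (Prod.mk_right_injective i).injOn, 2 ^ j := by
  classical
  rw [sum_preimage' _ _ _ fun x : ι × ℕ ↦ 2 ^ x.2, sum_filter, multisetOfBits, Multiset.count_sum']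
  refine sum_congr rfl fun x _ ↦ ?_
  simp [Multiset.count_nsmul, Multiset.count_singleton, eq_comm, Prod.ext_iff]

theorem multisetOfBits_bijective : Function.Bijective (multisetOfBits (ι := ι)) := by
  classical
  constructor
  · intro s t hst
    ext ⟨i, j⟩
    have hcount := congrArg (Multiset.count i) hst
    rw [count_multisetOfBits, count_multisetOfBits] at hcount
    simpa using Finset.ext_iff.1 (geomSum_injective le_rfl hcount) j
  · intro m
    refine ⟨m.toFinset.biUnion fun i ↦ {i} ×ˢ (m.count i).bitIndices.toFinset, ?_⟩
    ext i
    rw [count_multisetOfBits]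
    convert sum_toFinset_bitIndices_two_pow (m.count i)
    ext j
    by_cases hi : i ∈ m <;> simp [hi]

theorem multisetCount_eq_finsetCount (P : Set ι) (w : ι → ℕ) (n : ℕ) :
    multisetCount P w n = finsetCount (P ×ˢ Set.univ) (fun x : ι × ℕ ↦ 2 ^ x.2 * w x.1) n := by
  rw [multisetCount, ← Set.ncard_preimage_of_injective_subset_range
    multisetOfBits_bijective.injective (by simp [multisetOfBits_bijective.surjective.range_eq])]
  refine congrArg Set.ncard (Set.ext fun s ↦ ?_)
  simp [sum_map_multisetOfBits, mem_multisetOfBits, Set.subset_def]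

end BinaryExpansion

section Glaisher

variable {K : Set ℕ}

theorem two_pow_mul_mem_iff (hK : ∀ k, 2 * k ∈ K ↔ k ∈ K) (a k : ℕ) : 2 ^ a * k ∈ K ↔ k ∈ K := by
  induction a with
  | zero => simp
  | succ a ih => rw [pow_succ', mul_assoc, hK, ih]

theorem bijOn_two_pow_div_mul_mod (hK₀ : 0 ∉ K) (hK : ∀ k, 2 * k ∈ K ↔ k ∈ K) {d : ℕ}
    (hd : 0 < d) :
    Set.BijOn (fun x : ℕ × ℕ ↦ (2 ^ (x.2 / d) * x.1, x.2 % d)) ({k ∈ K | Odd k} ×ˢ Set.univ)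
      (K ×ˢ Set.Iio d) := by
  refine Set.InvOn.bijOn (f' := fun x ↦ (ordCompl[2] x.1, d * x.1.factorization 2 + x.2))
    ⟨?_, ?_⟩ ?_ ?_
  · rintro ⟨k, j⟩ ⟨⟨hk, hodd⟩, -⟩
    have hv : (2 ^ (j / d) * k).factorization 2 = j / d := by
      have h₂ : ¬ 2 ∣ k := hodd.not_two_dvd_nat
      have hk' : k ≠ 0 := ne_of_mem_of_not_mem hk hK₀
      simp [Nat.factorization_mul, hk', Nat.factorization_eq_zero_of_not_dvd h₂,
        Nat.prime_two.factorization_self]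
    simp [hv, Nat.div_add_mod]
  · rintro ⟨k, i⟩ ⟨-, hi⟩
    simp [Nat.mul_add_div hd, Nat.div_eq_of_lt hi, Nat.mod_eq_of_lt hi,
      Nat.ordProj_mul_ordCompl_eq_self]
  · rintro ⟨k, j⟩ ⟨⟨hk, -⟩, -⟩
    exact ⟨(two_pow_mul_mem_iff hK _ k).2 hk, Nat.mod_lt j hd⟩
  · rintro ⟨k, i⟩ ⟨hk, -⟩
    refine ⟨⟨?_, Nat.not_even_iff_odd.1 fun h ↦ ?_⟩, trivial⟩
    · rwa [← two_pow_mul_mem_iff hK (k.factorization 2), Nat.ordProj_mul_ordCompl_eq_self]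
    · exact Nat.not_dvd_ordCompl Nat.prime_two (ne_of_mem_of_not_mem hk hK₀) h.two_dvd

theorem multisetCount_odd_pow_eq_finsetCount (hK₀ : 0 ∉ K) (hK : ∀ k, 2 * k ∈ K ↔ k ∈ K) {d : ℕ}
    (hd : 0 < d) (n : ℕ) :
    multisetCount {k ∈ K | Odd k} (· ^ d) n =
      finsetCount (K ×ˢ Set.Iio d) (fun x ↦ 2 ^ x.2 * x.1 ^ d) n := by
  rw [multisetCount_eq_finsetCount]
  refine finsetCount_eq_of_bijOn (bijOn_two_pow_div_mul_mod hK₀ hK hd) (fun x _ ↦ ?_) n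
  calc 2 ^ (x.2 % d) * (2 ^ (x.2 / d) * x.1) ^ d
      = 2 ^ (x.2 % d + d * (x.2 / d)) * x.1 ^ d := by ring
    _ = 2 ^ x.2 * x.1 ^ d := by rw [Nat.mod_add_div]

end Glaisher

theorem one_add_pow_two_pow_sub_one {R : Type*} [CommSemiring R] [CharP R 2] (y : R) (d : ℕ) :
    (1 + y) ^ (2 ^ d - 1) = ∏ i ∈ range d, (1 + y ^ 2 ^ i) := by
  calc (1 + y) ^ (2 ^ d - 1) = ∏ i ∈ range d, (1 + y) ^ 2 ^ i := by
        rw [prod_pow_eq_pow_sum, Nat.geomSum_eq le_rfl, Nat.div_one]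
    _ = ∏ i ∈ range d, (1 + y ^ 2 ^ i) := by simp only [add_pow_char_pow, one_pow]

theorem finsetCount_two_pow_mul_modEq {ι : Type*} {P : Set ι} {w : ι → ℕ} {n : ℕ}
    (hP : {i ∈ P | w i ≤ n}.Finite) (d : ℕ) :
    finsetCount (P ×ˢ Set.Iio d) (fun x ↦ 2 ^ x.2 * w x.1) n ≡
      finsetCount (P ×ˢ Set.Icc 1 (2 ^ d - 1)) (fun x ↦ w x.1) n [MOD 2] := by
  rw [finsetCount_prod_eq_sep_prod (w := w) fun x ↦
      Nat.le_mul_of_pos_left _ (Nat.two_pow_pos x.2),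
    finsetCount_prod_eq_sep_prod (w := w) fun x ↦ le_rfl]
  lift {i ∈ P | w i ≤ n} to Finset ι using hP with S
  rw [← coe_range, ← coe_Icc, ← coe_product, ← coe_product, ← ZMod.natCast_eq_natCast_iff,
    ← coeff_prod_one_add_X_pow, ← coeff_prod_one_add_X_pow, prod_product, prod_product]
  congr 1
  refine prod_congr rfl fun i _ ↦ ?_
  calc ∏ j ∈ range d, (1 + X ^ (2 ^ j * w i) : (ZMod 2)[X])
      = ∏ j ∈ range d, (1 + (X ^ w i) ^ 2 ^ j) := by simp only [← pow_mul, mul_comm]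
    _ = (1 + X ^ w i) ^ (2 ^ d - 1) := (one_add_pow_two_pow_sub_one _ d).symm
    _ = ∏ _c ∈ Icc 1 (2 ^ d - 1), (1 + X ^ w i) := by simp

theorem stmt0_general {K : Set ℕ} (hK₀ : 0 ∉ K) (hK : ∀ k, 2 * k ∈ K ↔ k ∈ K) {d : ℕ}
    (hd : 0 < d) (n : ℕ) :
    multisetCount {k ∈ K | Odd k} (· ^ d) n ≡
      finsetCount (K ×ˢ Set.Icc 1 (2 ^ d - 1)) (fun x ↦ x.1 ^ d) n [MOD 2] := by
  have hfin : {k ∈ K | k ^ d ≤ n}.Finite :=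
    (Set.finite_Iic n).subset fun k hk ↦ (Nat.le_self_pow hd.ne' k).trans hk.2
  rw [multisetCount_odd_pow_eq_finsetCount hK₀ hK hd]
  exact finsetCount_two_pow_mul_modEq hfin d

theorem A_two_eq_multisetCount (d p₂ n : ℕ) :
    A d 2 p₂ n = multisetCount {k ∈ {k | 0 < k ∧ ¬ p₂ ∣ k} | Odd k} (· ^ d) n := by
  refine Nat.card_congr (Equiv.subtypeEquivRight fun s ↦ ?_)
  simp [and_assoc, and_comm, and_left_comm, Nat.odd_iff]

theorem B_eq_finsetCount (d p₁ p₂ n : ℕ) :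
    B d p₁ p₂ n =
      finsetCount ({k | 0 < k ∧ ¬ p₂ ∣ k} ×ˢ Set.Icc 1 (p₁ ^ d - 1)) (fun x ↦ x.1 ^ d) n := by
  refine Nat.card_congr (Equiv.subtypeEquivRight fun s ↦ ?_)
  simp [Set.subset_def, and_assoc]

theorem stmt0 (d p₂ : ℕ) (hd : 0 < d) (hp₂ : 3 ≤ p₂) (hodd : Odd p₂) (n : ℕ) :
    A d 2 p₂ n ≡ B d 2 p₂ n [MOD 2] := by
  rw [A_two_eq_multisetCount, B_eq_finsetCount]
  exact stmt0_general (by simp) (by simp [(Nat.coprime_two_right.2 hodd).dvd_mul_left]) hd n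
end

section
/- Let $d$ be a positive integer, let $p_1 \geq 3$ be an odd prime, let $p_2 \geq 2$ be an integer with $p_1 \nmid p_2$, and let $n \geq 1$. Then $\sum_{i=0}^{n} A_{p_1,p_2}(i)\, C_{p_1,p_2}(n-i) \equiv 0 \pmod{p_1}$. -/
/-- `C d p₁ p₂ n`: the number of partitions of `n` into colored `d`-th powers of positive
integers not divisible by `p₂`, each part carrying one of `p₁ ^ d - 1` colors; represented
as multisets of pairs (base, color). -/
noncomputable def C (d p₁ p₂ n : ℕ) : ℕ :=
  Nat.card {s : Multiset (ℕ × ℕ) //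
    (∀ x ∈ s, 0 < x.1 ∧ ¬ p₂ ∣ x.1 ∧ 1 ≤ x.2 ∧ x.2 ≤ p₁ ^ d - 1) ∧
    (s.map fun x => x.1 ^ d).sum = n}

/-!
Let `S` be a set of positive integers such that `p * k ∈ S ↔ k ∈ S`, and let `F` be the generating
function of the partitions into `d`-th powers of elements of `S`. Splitting off the parts divisible
by `p` gives `F(X) = G(X) * F(X ^ (p ^ d))`, where `G` counts the partitions without such parts.
Modulo a prime `p` the second factor is `F(X) ^ (p ^ d)`, and cancelling `F` leaves
`G * F ^ (p ^ d - 1) = 1`. The power `F ^ (p ^ d - 1)` counts partitions with `p ^ d - 1` colors, so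
for `p = p₁` and `S` the positive integers not divisible by `p₂` the coefficients of this identity
in positive degree are the asserted congruences.
-/

open scoped PowerSeries
open Finset.HasAntidiagonal (antidiagonal mem_antidiagonal)

section WeightedMultisets

variable {α β : Type*} {S T : Set α} {w : α → ℕ}

/-- The partitions of `n` with parts labelled by `S`, where the label `a` stands for a part of size
`w a`; distinct labels of the same weight are parts of the same size in different colors. -/
def weightedMultisets (S : Set α) (w : α → ℕ) (n : ℕ) : Set (Multiset α) :=
  {s | (∀ a ∈ s, a ∈ S) ∧ (s.map w).sum = n}

/-- The condition on `w` that makes the number of multisets in `S` of each total weight finite: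
weights are positive, and only finitely many elements of `S` have weight at most a given bound. -/
structure IsLocallyFiniteWeight (S : Set α) (w : α → ℕ) : Prop where
  pos : ∀ a ∈ S, 0 < w a
  finite_le : ∀ n, {a ∈ S | w a ≤ n}.Finite

namespace IsLocallyFiniteWeight

theorem mono (h : IsLocallyFiniteWeight T w) (hST : S ⊆ T) : IsLocallyFiniteWeight S w where
  pos a ha := h.pos a (hST ha)
  finite_le n := (h.finite_le n).subset fun _ ha => ⟨hST ha.1, ha.2⟩

theorem prod (h : IsLocallyFiniteWeight S w) {K : Set β} (hK : K.Finite) :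
    IsLocallyFiniteWeight (S ×ˢ K) (fun x => w x.1) where
  pos x hx := h.pos x.1 hx.1
  finite_le n := ((h.finite_le n).prod hK).subset fun _ hx => ⟨⟨hx.1.1, hx.2⟩, hx.1.2⟩

theorem pow {S : Set ℕ} (hS : ∀ k ∈ S, 0 < k) {d : ℕ} (hd : d ≠ 0) :
    IsLocallyFiniteWeight S (· ^ d) where
  pos k hk := pow_pos (hS k hk) d
  finite_le n := (Set.finite_Iic n).subset fun k hk => (Nat.le_self_pow hd k).trans hk.2

end IsLocallyFiniteWeight

theorem card_le_of_mem_weightedMultisets (hw : ∀ a ∈ S, 0 < w a) {n : ℕ} {s : Multiset α}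
    (hs : s ∈ weightedMultisets S w n) : s.card ≤ n := by
  have hone_le : ∀ x ∈ s.map w, 1 ≤ x :=
    Multiset.forall_mem_map_iff.2 fun a ha => hw a (hs.1 a ha)
  simpa [hs.2] using Multiset.card_nsmul_le_sum hone_le

theorem finite_weightedMultisets (h : IsLocallyFiniteWeight S w) (n : ℕ) :
    (weightedMultisets S w n).Finite := by
  classical
  set parts : Finset α := (h.finite_le n).toFinset
  refine (Set.finite_Iic (n • parts.val)).subset fun s hs => Multiset.le_iff_count.2 fun a => ?_
  by_cases ha : a ∈ s
  · have hwa : w a ≤ n :=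
      hs.2 ▸ Multiset.single_le_sum (fun _ _ => Nat.zero_le _) _ (Multiset.mem_map_of_mem w ha)
    have hparts : a ∈ parts := (h.finite_le n).mem_toFinset.2 ⟨hs.1 a ha, hwa⟩
    calc s.count a ≤ s.card := Multiset.count_le_card a s
      _ ≤ n := card_le_of_mem_weightedMultisets h.pos hs
      _ = (n • parts.val).count a := by
        rw [Multiset.count_nsmul, Multiset.count_eq_one_of_mem parts.nodup hparts, mul_one]
  · simp [Multiset.count_eq_zero_of_notMem ha]

theorem weightedMultisets_zero (hw : ∀ a ∈ S, 0 < w a) : weightedMultisets S w 0 = {0} := by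
  ext s
  refine ⟨fun hs => ?_, ?_⟩
  · exact Multiset.card_eq_zero.1 (Nat.le_zero.1 (card_le_of_mem_weightedMultisets hw hs))
  · rintro rfl
    simp [weightedMultisets]

theorem weightedMultisets_empty_of_ne_zero {n : ℕ} (hn : n ≠ 0) :
    weightedMultisets (∅ : Set α) w n = ∅ := by
  refine Set.eq_empty_of_forall_notMem fun s ⟨hs, hsum⟩ => hn ?_
  rw [← hsum, Multiset.eq_zero_of_forall_notMem hs, Multiset.map_zero, Multiset.sum_zero]

theorem weightedMultisets_image {f : β → α} (hf : f.Injective) (S : Set β) (n : ℕ) :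
    weightedMultisets (f '' S) w n = Multiset.map f '' weightedMultisets S (w ∘ f) n := by
  ext s
  constructor
  · rintro ⟨hs, hsum⟩
    have : CanLift α β f (· ∈ f '' S) := ⟨fun _ ⟨b, _, hb⟩ => ⟨b, hb⟩⟩
    obtain ⟨t, rfl⟩ := (Multiset.canLift f (· ∈ f '' S)).prf s hs
    refine ⟨t, ⟨fun b hb => ?_, by rwa [Multiset.map_map] at hsum⟩, rfl⟩
    exact hf.mem_set_image.1 (hs _ (Multiset.mem_map_of_mem f hb))
  · rintro ⟨t, ⟨ht, hsum⟩, rfl⟩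
    refine ⟨?_, by rwa [Multiset.map_map]⟩
    exact Multiset.forall_mem_map_iff.2 fun b hb => Set.mem_image_of_mem f (ht b hb)

theorem mem_weightedMultisets_const_mul {c n : ℕ} {s : Multiset α} :
    s ∈ weightedMultisets S (fun a => c * w a) n ↔
      (∀ a ∈ s, a ∈ S) ∧ c * (s.map w).sum = n := by
  rw [weightedMultisets, Set.mem_ofPred_eq, Multiset.sum_map_mul_left]

theorem add_injOn_of_disjoint (hST : Disjoint S T) :
    Set.InjOn (fun x : Multiset α × Multiset α => x.1 + x.2)
      ({s | ∀ a ∈ s, a ∈ S} ×ˢ {t | ∀ a ∈ t, a ∈ T}) := by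
  classical
  have filter_add_eq_left : ∀ s t : Multiset α, (∀ a ∈ s, a ∈ S) → (∀ a ∈ t, a ∈ T) →
      (s + t).filter (· ∈ S) = s := fun s t hs ht => by
    rw [Multiset.filter_add, Multiset.filter_eq_self.2 hs,
      Multiset.filter_eq_nil.2 fun a ha => hST.notMem_of_mem_right (ht a ha), add_zero]
  rintro ⟨s, t⟩ ⟨hs, ht⟩ ⟨s', t'⟩ ⟨hs', ht'⟩ (h : s + t = s' + t')
  obtain rfl : s = s' := by
    rw [← filter_add_eq_left s t hs ht, h, filter_add_eq_left s' t' hs' ht']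
  rw [add_left_cancel h]

theorem weightedMultisets_union (S T : Set α) (w : α → ℕ) (n : ℕ) :
    weightedMultisets (S ∪ T) w n = (fun x : Multiset α × Multiset α => x.1 + x.2) ''
      ⋃ ij ∈ antidiagonal n, weightedMultisets S w ij.1 ×ˢ weightedMultisets T w ij.2 := by
  classical
  ext u
  simp only [Set.mem_image, Set.mem_iUnion, mem_antidiagonal]
  constructor
  · rintro ⟨hu, hsum⟩
    refine ⟨(u.filter (· ∈ S), u.filter (· ∉ S)),
      ⟨(((u.filter (· ∈ S)).map w).sum, ((u.filter (· ∉ S)).map w).sum), ?_,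
        ⟨fun a ha => (Multiset.mem_filter.1 ha).2, rfl⟩, ⟨fun a ha => ?_, rfl⟩⟩,
      Multiset.filter_add_not _ u⟩
    · rw [← Multiset.sum_add, ← Multiset.map_add, Multiset.filter_add_not, hsum]
    · obtain ⟨hau, haS⟩ := Multiset.mem_filter.1 ha
      exact (hu a hau).resolve_left haS
  · rintro ⟨⟨s, t⟩, ⟨⟨i, j⟩, hij, ⟨hs, hsi⟩, ⟨ht, htj⟩⟩, rfl⟩
    refine ⟨fun a ha => (Multiset.mem_add.1 ha).imp (hs a) (ht a), ?_⟩
    rw [Multiset.map_add, Multiset.sum_add, hsi, htj, hij]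

theorem ncard_weightedMultisets_union (h : IsLocallyFiniteWeight (S ∪ T) w)
    (hST : Disjoint S T) (n : ℕ) :
    (weightedMultisets (S ∪ T) w n).ncard = ∑ ij ∈ antidiagonal n,
      (weightedMultisets S w ij.1).ncard * (weightedMultisets T w ij.2).ncard := by
  have hfin : ∀ ij ∈ (antidiagonal n : Set (ℕ × ℕ)),
      (weightedMultisets S w ij.1 ×ˢ weightedMultisets T w ij.2).Finite := fun ij _ =>
    (finite_weightedMultisets (h.mono Set.subset_union_left) _).prod
      (finite_weightedMultisets (h.mono Set.subset_union_right) _)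
  have hdisj : (antidiagonal n : Set (ℕ × ℕ)).PairwiseDisjoint
      fun ij => weightedMultisets S w ij.1 ×ˢ weightedMultisets T w ij.2 :=
    fun ij _ kl _ hne => Set.disjoint_left.2 fun _ hx hx' =>
      hne (Prod.ext (hx.1.2.symm.trans hx'.1.2) (hx.2.2.symm.trans hx'.2.2))
  have hinj := (add_injOn_of_disjoint hST).mono <|
    Set.iUnion₂_subset fun ij (_ : ij ∈ antidiagonal n) =>
      Set.prod_mono (fun s (hs : s ∈ weightedMultisets S w ij.1) => hs.1)
        (fun t (ht : t ∈ weightedMultisets T w ij.2) => ht.1)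
  rw [weightedMultisets_union, hinj.ncard_image]
  simp_rw [← Finset.mem_coe]
  rw [(Finset.finite_toSet _).ncard_biUnion hfin hdisj, finsum_mem_coe_finset]
  simp only [Set.ncard_prod]

end WeightedMultisets

section GenFun

variable (R : Type*) {α β : Type*}

section Semiring

variable [Semiring R]

/-- The generating function, with coefficients in `R`, of the partitions with parts labelled by `S`
and sizes given by `w`. It is meaningful only for locally finite `w`: a coefficient with infinitely
many multisets to count is `0`. -/
noncomputable def multisetGenFun (S : Set α) (w : α → ℕ) : R⟦X⟧ :=
  PowerSeries.mk fun n => ((weightedMultisets S w n).ncard : R)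

variable {S T : Set α} {w : α → ℕ}

theorem coeff_multisetGenFun (S : Set α) (w : α → ℕ) (n : ℕ) :
    PowerSeries.coeff n (multisetGenFun R S w) = (weightedMultisets S w n).ncard :=
  PowerSeries.coeff_mk n _

theorem multisetGenFun_ne_zero [Nontrivial R] (hw : ∀ a ∈ S, 0 < w a) :
    multisetGenFun R S w ≠ 0 := fun h => by
  have hcoeff : PowerSeries.coeff 0 (multisetGenFun R S w) = 1 := by
    rw [coeff_multisetGenFun, weightedMultisets_zero hw, Set.ncard_singleton, Nat.cast_one]
  simp [h] at hcoeff

theorem multisetGenFun_empty (w : α → ℕ) : multisetGenFun R ∅ w = 1 := by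
  ext n
  rw [coeff_multisetGenFun, PowerSeries.coeff_one]
  split_ifs with hn
  · rw [hn, weightedMultisets_zero (fun _ ha => ha.elim), Set.ncard_singleton, Nat.cast_one]
  · rw [weightedMultisets_empty_of_ne_zero hn, Set.ncard_empty, Nat.cast_zero]

theorem multisetGenFun_image {f : β → α} (hf : f.Injective) (S : Set β) (w : α → ℕ) :
    multisetGenFun R (f '' S) w = multisetGenFun R S (w ∘ f) := by
  ext n
  rw [coeff_multisetGenFun, coeff_multisetGenFun, weightedMultisets_image hf,
    Set.ncard_image_of_injective _ (Multiset.map_injective hf)]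

theorem multisetGenFun_union (h : IsLocallyFiniteWeight (S ∪ T) w) (hST : Disjoint S T) :
    multisetGenFun R (S ∪ T) w = multisetGenFun R S w * multisetGenFun R T w := by
  ext n
  simp [PowerSeries.coeff_mul, coeff_multisetGenFun, ncard_weightedMultisets_union h hST]

theorem multisetGenFun_prod_finset (h : IsLocallyFiniteWeight S w) (K : Finset β) :
    multisetGenFun R (S ×ˢ (K : Set β)) (fun x => w x.1) = multisetGenFun R S w ^ K.card := by
  classical
  induction K using Finset.induction_on with
  | empty => simp [multisetGenFun_empty]
  | insert c K hc ih =>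
    have hunion : S ×ˢ (↑(insert c K) : Set β) = S ×ˢ (K : Set β) ∪ (fun a => (a, c)) '' S := by
      rw [Finset.coe_insert, Set.insert_eq, Set.prod_union, Set.prod_singleton, Set.union_comm]
    have hdisj : Disjoint (S ×ˢ (K : Set β)) ((fun a => (a, c)) '' S) := by
      rw [← Set.prod_singleton]
      exact Set.disjoint_prod.2 (Or.inr (Set.disjoint_singleton_right.2 hc))
    have hweight := h.prod (insert c K).finite_toSet
    rw [hunion] at hweight ⊢
    rw [multisetGenFun_union R hweight hdisj, ih,
      multisetGenFun_image R (Prod.mk_left_injective c), Finset.card_insert_of_notMem hc, pow_succ]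
    rfl

end Semiring

theorem multisetGenFun_const_mul [CommRing R] (S : Set α) (w : α → ℕ) {c : ℕ} (hc : c ≠ 0) :
    multisetGenFun R S (fun a => c * w a) = (multisetGenFun R S w).expand c hc := by
  ext n
  rw [PowerSeries.coeff_expand, coeff_multisetGenFun]
  split_ifs with hcn
  · obtain ⟨m, rfl⟩ := hcn
    rw [Nat.mul_div_cancel_left _ (Nat.pos_of_ne_zero hc), coeff_multisetGenFun]
    congr 2
    ext s
    rw [mem_weightedMultisets_const_mul, Nat.mul_right_inj hc]
    rfl
  · have hempty : weightedMultisets S (fun a => c * w a) n = ∅ :=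
      Set.eq_empty_of_forall_notMem fun s hs =>
        hcn ⟨_, (mem_weightedMultisets_const_mul.1 hs).2.symm⟩
    rw [hempty, Set.ncard_empty, Nat.cast_zero]

end GenFun

section ModPrime

variable {p : ℕ} [Fact p.Prime] {S : Set ℕ}

theorem expand_prime_pow_eq_pow (f : (ZMod p)⟦X⟧) (d : ℕ) :
    f.expand (p ^ d) (pow_ne_zero d (NeZero.ne p)) = f ^ p ^ d := by
  have hfrob : iterateFrobenius (ZMod p) p d = RingHom.id _ := Subsingleton.elim _ _
  have h := MvPowerSeries.map_iterateFrobenius_expand p (NeZero.ne p) f d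
  rwa [hfrob, MvPowerSeries.map_id] at h

theorem multisetGenFun_sep_dvd (hS : ∀ k, p * k ∈ S ↔ k ∈ S) (d : ℕ) :
    multisetGenFun (ZMod p) {k ∈ S | p ∣ k} (· ^ d) =
      multisetGenFun (ZMod p) S (· ^ d) ^ p ^ d := by
  have hp : p ≠ 0 := NeZero.ne p
  have himage : {k ∈ S | p ∣ k} = (p * ·) '' S := by
    ext k
    constructor
    · rintro ⟨hk, m, rfl⟩
      exact ⟨m, (hS m).1 hk, rfl⟩
    · rintro ⟨m, hm, rfl⟩
      exact ⟨(hS m).2 hm, dvd_mul_right p m⟩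
  have hweight : (· ^ d) ∘ (p * ·) = fun k : ℕ => p ^ d * k ^ d := funext fun k => mul_pow p k d
  rw [himage, multisetGenFun_image _ (mul_right_injective₀ hp), hweight,
    multisetGenFun_const_mul _ _ _ (pow_ne_zero d hp), expand_prime_pow_eq_pow]

theorem multisetGenFun_sep_not_dvd_mul_pow (hpos : ∀ k ∈ S, 0 < k)
    (hS : ∀ k, p * k ∈ S ↔ k ∈ S) {d : ℕ} (hd : d ≠ 0) :
    multisetGenFun (ZMod p) {k ∈ S | ¬ p ∣ k} (· ^ d) *
      multisetGenFun (ZMod p) S (· ^ d) ^ (p ^ d - 1) = 1 := by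
  set F := multisetGenFun (ZMod p) S (· ^ d)
  set G := multisetGenFun (ZMod p) {k ∈ S | ¬ p ∣ k} (· ^ d)
  have hw : IsLocallyFiniteWeight S (· ^ d) := .pow hpos hd
  have hunion : {k ∈ S | ¬ p ∣ k} ∪ {k ∈ S | p ∣ k} = S := by
    ext k
    by_cases hk : p ∣ k <;> simp [hk]
  have hdisj : Disjoint {k ∈ S | ¬ p ∣ k} {k ∈ S | p ∣ k} :=
    Set.disjoint_left.2 fun _ hk hk' => hk.2 hk'.2
  have hsplit : F = G * F ^ p ^ d := by
    rw [← multisetGenFun_sep_dvd hS, ← multisetGenFun_union _ (hunion.symm ▸ hw) hdisj, hunion]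
  have hp : 0 < p ^ d := pow_pos (NeZero.pos p) d
  refine mul_right_cancel₀ (multisetGenFun_ne_zero (ZMod p) hw.pos) ?_
  calc G * F ^ (p ^ d - 1) * F = G * F ^ p ^ d := by rw [mul_assoc, pow_sub_one_mul hp.ne']
    _ = 1 * F := by rw [← hsplit, one_mul]

end ModPrime

/-- The bases of the parts counted by `C`: the positive integers not divisible by `q`. -/
def posNotDvd (q : ℕ) : Set ℕ := {k | 0 < k ∧ ¬ q ∣ k}

theorem mul_mem_posNotDvd_iff {p q k : ℕ} (hp : p.Prime) (hpq : ¬ p ∣ q) :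
    p * k ∈ posNotDvd q ↔ k ∈ posNotDvd q := by
  have hcop : q.Coprime p := (hp.coprime_iff_not_dvd.2 hpq).symm
  simp only [posNotDvd, Set.mem_ofPred_eq, Nat.mul_pos_iff_of_pos_left hp.pos, hcop.dvd_mul_left]

theorem natCast_A_eq_coeff (R : Type*) [Semiring R] (d p₁ p₂ n : ℕ) :
    (A d p₁ p₂ n : R) = PowerSeries.coeff n
      (multisetGenFun R {k ∈ posNotDvd p₂ | ¬ p₁ ∣ k} (· ^ d)) := by
  rw [coeff_multisetGenFun, A, ← Nat.card_coe_set_eq]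
  simp only [weightedMultisets, posNotDvd, Set.mem_ofPred_eq, Set.coe_ofPred, and_assoc, and_comm]

theorem natCast_C_eq_coeff (R : Type*) [Semiring R] {d : ℕ} (hd : d ≠ 0) (p₁ p₂ n : ℕ) :
    (C d p₁ p₂ n : R) = PowerSeries.coeff n
      (multisetGenFun R (posNotDvd p₂) (· ^ d) ^ (p₁ ^ d - 1)) := by
  have hw : IsLocallyFiniteWeight (posNotDvd p₂) (· ^ d) := .pow (fun _ hk => hk.1) hd
  have hcolors : (Finset.Icc 1 (p₁ ^ d - 1)).card = p₁ ^ d - 1 := by simp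
  rw [← hcolors, ← multisetGenFun_prod_finset R hw, coeff_multisetGenFun, C,
    ← Nat.card_coe_set_eq]
  simp only [weightedMultisets, posNotDvd, Set.mem_prod, Set.mem_ofPred_eq, Finset.coe_Icc,
    Set.mem_Icc, Set.coe_ofPred, and_assoc]

theorem stmt1_general (d p₁ p₂ n : ℕ) (hd : 0 < d) (hp₁ : p₁.Prime) (hnd : ¬ p₁ ∣ p₂)
    (hn : 1 ≤ n) :
    (∑ i ∈ Finset.range (n + 1), A d p₁ p₂ i * C d p₁ p₂ (n - i)) ≡ 0 [MOD p₁] := by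
  have : Fact p₁.Prime := ⟨hp₁⟩
  have hone : multisetGenFun (ZMod p₁) {k ∈ posNotDvd p₂ | ¬ p₁ ∣ k} (· ^ d) *
      multisetGenFun (ZMod p₁) (posNotDvd p₂) (· ^ d) ^ (p₁ ^ d - 1) = 1 :=
    multisetGenFun_sep_not_dvd_mul_pow (fun _ hk => hk.1)
      (fun _ => mul_mem_posNotDvd_iff hp₁ hnd) hd.ne'
  have hcoeff := congrArg (PowerSeries.coeff n) hone
  rw [PowerSeries.coeff_mul, PowerSeries.coeff_one, if_neg (Nat.one_le_iff_ne_zero.1 hn),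
    Finset.Nat.sum_antidiagonal_eq_sum_range_succ_mk] at hcoeff
  rw [← ZMod.natCast_eq_natCast_iff]
  push_cast
  simpa only [natCast_A_eq_coeff, natCast_C_eq_coeff _ hd.ne'] using hcoeff

theorem stmt1 (d p₁ p₂ n : ℕ) (hd : 0 < d) (hp₁ : p₁.Prime) (hp₁3 : 3 ≤ p₁)
    (hp₂ : 2 ≤ p₂) (hnd : ¬ p₁ ∣ p₂) (hn : 1 ≤ n) :
    (∑ i ∈ Finset.range (n + 1), A d p₁ p₂ i * C d p₁ p₂ (n - i)) ≡ 0 [MOD p₁] :=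
  stmt1_general d p₁ p₂ n hd hp₁ hnd hn
end

section
/- Let $d$ be a positive integer, let $p_2 \geq 3$ be an odd integer, and let $n$ be a non-negative integer. Then $A_{2,p_2}(n) = D_{p_2}(n)$, i.e., the number of partitions of $n$ into $d$-th powers of integers divisible by neither $2$ nor $p_2$ equals the number of partitions of $n$ into $d$-th powers of odd integers in which no part appears more than $p_2^d-1$ times. -/
/-- `D d p₂ n`: the number of partitions of `n` all of whose parts are `d`-th powers of
positive odd integers, in which every part occurs with multiplicity at most `p₂ ^ d - 1`;
represented as multisets of the bases `k`. -/
noncomputable def D (d p₂ n : ℕ) : ℕ :=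
  Nat.card {s : Multiset ℕ //
    (∀ k ∈ s, 0 < k ∧ Odd k) ∧ (∀ k, s.count k ≤ p₂ ^ d - 1) ∧
    (s.map (· ^ d)).sum = n}

theorem exists_add_nsmul_eq {α : Type*} [DecidableEq α] {q : ℕ} (hq : 0 < q) (s : Multiset α) :
    ∃ a b : Multiset α, (∀ k, a.count k < q) ∧ a + q • b = s := by
  refine ⟨(s.toFinsupp.mapRange (· % q) (Nat.zero_mod q)).toMultiset,
    (s.toFinsupp.mapRange (· / q) (Nat.zero_div q)).toMultiset, fun k ↦ ?_, ?_⟩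
  · simpa using Nat.mod_lt _ hq
  · ext k
    simp [Nat.mod_add_div]

theorem eq_and_eq_of_add_nsmul_eq {α : Type*} [DecidableEq α] {q : ℕ} {a b a' b' : Multiset α}
    (ha : ∀ k, a.count k < q) (ha' : ∀ k, a'.count k < q) (h : a + q • b = a' + q • b') :
    a = a' ∧ b = b' := by
  have hcount (k : α) : a.count k + q * b.count k = a'.count k + q * b'.count k := by
    simpa using congrArg (Multiset.count k) h
  have ha_eq : a = a' := by
    ext k
    simpa [Nat.add_mul_mod_self_left, Nat.mod_eq_of_lt, ha k, ha' k] using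
      congrArg (· % q) (hcount k)
  subst ha_eq
  refine ⟨rfl, Multiset.ext.2 fun k ↦ ?_⟩
  exact Nat.eq_of_mul_eq_mul_left ((Nat.zero_le _).trans_lt (ha k)) (Nat.add_left_cancel (hcount k))

theorem lt_add_nsmul {α : Type*} {q : ℕ} (hq : 1 < q) {a b : Multiset α} (h : a + q • b ≠ 0) :
    b < a + q • b := by
  have hle : b ≤ a + q • b := (le_self_nsmul b.zero_le (by lia)).trans (Multiset.le_add_left _ _)
  refine hle.lt_of_ne fun heq ↦ h ?_
  have hcard : b.card = a.card + q * b.card := by simpa using congrArg Multiset.card heq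
  have hb : b.card = 0 := by nlinarith
  rw [← heq, Multiset.card_eq_zero.1 hb]

theorem exists_add_map_mul_eq (p : ℕ) (s : Multiset ℕ) :
    ∃ a b : Multiset ℕ, (∀ k ∈ a, ¬ p ∣ k) ∧ a + b.map (p * ·) = s := by
  refine ⟨s.filter (¬ p ∣ ·), (s.filter (p ∣ ·)).map (· / p),
    fun k hk ↦ (Multiset.mem_filter.1 hk).2, ?_⟩
  have hmul : ((s.filter (p ∣ ·)).map (· / p)).map (p * ·) = s.filter (p ∣ ·) := by
    rw [Multiset.map_map]
    exact (Multiset.map_congr rfl fun k hk ↦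
      Nat.mul_div_cancel' (Multiset.mem_filter.1 hk).2).trans (Multiset.map_id _)
  rw [hmul, add_comm, Multiset.filter_add_not]

theorem zero_notMem_add_map_mul_iff {p : ℕ} (hp : p ≠ 0) {a b : Multiset ℕ}
    (hpa : ∀ k ∈ a, ¬ p ∣ k) : 0 ∉ a + b.map (p * ·) ↔ 0 ∉ b := by
  have ha : 0 ∉ a := fun h ↦ hpa 0 h (dvd_zero p)
  simp [ha, hp]

theorem forall_count_add_map_mul_lt_iff {p q : ℕ} (hp : p ≠ 0) {a b : Multiset ℕ}
    (hpa : ∀ k ∈ a, ¬ p ∣ k) :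
    (∀ k, (a + b.map (p * ·)).count k < q) ↔
      (∀ k, a.count k < q) ∧ ∀ k, b.count k < q := by
  have hcount (k : ℕ) : (b.map (p * ·)).count (p * k) = b.count k :=
    Multiset.count_map_eq_count' _ _ (mul_right_injective₀ hp) k
  simp only [Multiset.count_add]
  refine ⟨fun h ↦ ⟨fun k ↦ by grind, fun k ↦ by grind⟩, fun ⟨ha, hb⟩ k ↦ ?_⟩
  by_cases hk : p ∣ k
  · obtain ⟨j, rfl⟩ := hk
    have hja : p * j ∉ a := fun h ↦ hpa _ h (dvd_mul_right p j)
    simpa [Multiset.count_eq_zero_of_notMem hja, hcount] using hb j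
  · have hkb : k ∉ b.map (p * ·) := fun h ↦ by
      obtain ⟨j, -, rfl⟩ := Multiset.mem_map.1 h
      exact hk (dvd_mul_right p j)
    simpa [Multiset.count_eq_zero_of_notMem hkb] using ha k

/-- Glaisher's splitting map: every `k = p ^ i * m` with `p ∤ m` becomes `q ^ i` copies of `m`.
Partitions into `d`-th powers, encoded by their bases, are split with `q = p ^ d`. -/
def glaisherSplit (p q : ℕ) : Multiset ℕ →+ Multiset ℕ where
  toFun s := s.bind fun k ↦ Multiset.replicate (q ^ padicValNat p k) (k.divMaxPow p)
  map_zero' := Multiset.zero_bind _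
  map_add' _ _ := Multiset.add_bind _ _ _

section GlaisherSplit

variable {p q : ℕ} {s t : Multiset ℕ}

theorem glaisherSplit_cons (p q k : ℕ) (s : Multiset ℕ) :
    glaisherSplit p q (k ::ₘ s) =
      Multiset.replicate (q ^ padicValNat p k) (k.divMaxPow p) + glaisherSplit p q s :=
  Multiset.cons_bind _ _ _

theorem mem_glaisherSplit (hq : q ≠ 0) {m : ℕ} :
    m ∈ glaisherSplit p q s ↔ ∃ k ∈ s, k.divMaxPow p = m := by
  simp [glaisherSplit, Multiset.mem_replicate, hq, eq_comm]

theorem glaisherSplit_eq_zero (hq : q ≠ 0) : glaisherSplit p q s = 0 ↔ s = 0 := by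
  simp [Multiset.eq_zero_iff_forall_notMem, mem_glaisherSplit hq]

theorem glaisherSplit_eq_self (hs : ∀ k ∈ s, ¬ p ∣ k) : glaisherSplit p q s = s := by
  induction s using Multiset.induction with
  | empty => exact map_zero _
  | cons k s ih =>
    rw [Multiset.forall_mem_cons] at hs
    have hval : padicValNat p k = 0 := padicValNat.eq_zero_of_not_dvd hs.1
    have hdiv : k.divMaxPow p = k := by
      simpa [hval] using Nat.pow_padicValNat_mul_divMaxPow p k
    rw [glaisherSplit_cons, ih hs.2, hval, hdiv, pow_zero, Multiset.replicate_one,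
      Multiset.singleton_add]

theorem glaisherSplit_map_mul (hp : 1 < p) (hs : 0 ∉ s) :
    glaisherSplit p q (s.map (p * ·)) = q • glaisherSplit p q s := by
  induction s using Multiset.induction with
  | empty => simp
  | cons k s ih =>
    rw [Multiset.mem_cons, not_or] at hs
    rw [Multiset.map_cons, glaisherSplit_cons, glaisherSplit_cons, ih hs.2, nsmul_add,
      Multiset.nsmul_replicate, padicValNat_base_mul hp (Ne.symm hs.1),
      Nat.divMaxPow_base_mul (by lia), pow_succ']

theorem sum_map_pow_glaisherSplit (p d : ℕ) (s : Multiset ℕ) :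
    ((glaisherSplit p (p ^ d) s).map (· ^ d)).sum = (s.map (· ^ d)).sum := by
  induction s using Multiset.induction with
  | empty => simp
  | cons k s ih =>
    have hk : (p ^ d) ^ padicValNat p k * k.divMaxPow p ^ d = k ^ d := by
      rw [pow_right_comm, ← mul_pow, Nat.pow_padicValNat_mul_divMaxPow]
    simp [glaisherSplit_cons, ih, hk]

theorem glaisherSplit_add_map_mul {a b : Multiset ℕ} (hp : 1 < p) (ha : ∀ k ∈ a, ¬ p ∣ k)
    (hb : 0 ∉ b) :
    glaisherSplit p q (a + b.map (p * ·)) = a + q • glaisherSplit p q b := by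
  rw [map_add, glaisherSplit_eq_self ha, glaisherSplit_map_mul hp hb]

theorem existsUnique_glaisherSplit_eq (hp : 1 < p) (hq : 1 < q) (ht : ∀ m ∈ t, ¬ p ∣ m) :
    ∃! s, (0 ∉ s ∧ ∀ k, s.count k < q) ∧ glaisherSplit p q s = t := by
  have hp₀ : p ≠ 0 := by lia
  have hq₀ : q ≠ 0 := by lia
  induction t using Multiset.strongInductionOn with
  | ih t ih =>
  rcases eq_or_ne t 0 with rfl | ht₀
  · exact ⟨0, by simp [hq₀.pos], fun s hs ↦ (glaisherSplit_eq_zero hq₀).1 hs.2⟩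
  obtain ⟨a, b, ha, rfl⟩ := exists_add_nsmul_eq hq₀.pos t
  have hpa : ∀ m ∈ a, ¬ p ∣ m := fun m hm ↦ ht m (Multiset.mem_add.2 (.inl hm))
  have hpb : ∀ m ∈ b, ¬ p ∣ m := fun m hm ↦ ht m (by simp [hm, hq₀])
  obtain ⟨c, ⟨⟨hc₀, hcq⟩, hcb⟩, hc_unique⟩ := ih b (lt_add_nsmul hq ht₀) hpb
  refine ⟨a + c.map (p * ·), ⟨⟨?_, ?_⟩, ?_⟩, ?_⟩
  · exact (zero_notMem_add_map_mul_iff hp₀ hpa).2 hc₀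
  · exact (forall_count_add_map_mul_lt_iff hp₀ hpa).2 ⟨ha, hcq⟩
  · rw [glaisherSplit_add_map_mul hp hpa hc₀, hcb]
  · rintro s ⟨⟨hs₀, hsq⟩, hs⟩
    obtain ⟨a', c', hpa', rfl⟩ := exists_add_map_mul_eq p s
    rw [zero_notMem_add_map_mul_iff hp₀ hpa'] at hs₀
    rw [forall_count_add_map_mul_lt_iff hp₀ hpa'] at hsq
    rw [glaisherSplit_add_map_mul hp hpa' hs₀] at hs
    obtain ⟨rfl, hb⟩ := eq_and_eq_of_add_nsmul_eq hsq.1 ha hs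
    rw [hc_unique c' ⟨⟨hs₀, hsq.2⟩, hb⟩]

theorem bijOn_glaisherSplit (hp : 1 < p) (hq : 1 < q) :
    Set.BijOn (glaisherSplit p q) {s | 0 ∉ s ∧ ∀ k, s.count k < q} {t | ∀ m ∈ t, ¬ p ∣ m} := by
  have hmaps : Set.MapsTo (glaisherSplit p q) {s | 0 ∉ s ∧ ∀ k, s.count k < q}
      {t | ∀ m ∈ t, ¬ p ∣ m} := by
    rintro s ⟨hs, -⟩ m hm
    obtain ⟨k, hk, rfl⟩ := (mem_glaisherSplit (by lia)).1 hm
    exact Nat.not_dvd_divMaxPow hp (ne_of_mem_of_not_mem hk hs)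
  refine ⟨hmaps, fun s hs s' hs' h ↦ ?_, fun t ht ↦ (existsUnique_glaisherSplit_eq hp hq ht).exists⟩
  exact (existsUnique_glaisherSplit_eq hp hq (hmaps hs')).unique ⟨hs, h⟩ ⟨hs', rfl⟩

end GlaisherSplit

theorem divMaxPow_mem_iff {p : ℕ} {S : Set ℕ} (hS : ∀ k, p * k ∈ S ↔ k ∈ S) (k : ℕ) :
    k.divMaxPow p ∈ S ↔ k ∈ S := by
  have hpow (j m : ℕ) : p ^ j * m ∈ S ↔ m ∈ S := by
    induction j with
    | zero => simp
    | succ j ih => rw [pow_succ', mul_assoc, hS, ih]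
  rw [← hpow (padicValNat p k), Nat.pow_padicValNat_mul_divMaxPow]

theorem bijOn_glaisherSplit_pow {d p : ℕ} (hd : d ≠ 0) (hp : 1 < p) {S : Set ℕ} (hS₀ : 0 ∉ S)
    (hS : ∀ k, p * k ∈ S ↔ k ∈ S) (n : ℕ) :
    Set.BijOn (glaisherSplit p (p ^ d))
      {s | (∀ k ∈ s, k ∈ S) ∧ (∀ k, s.count k < p ^ d) ∧ (s.map (· ^ d)).sum = n}
      {t | (∀ m ∈ t, m ∈ S ∧ ¬ p ∣ m) ∧ (t.map (· ^ d)).sum = n} := by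
  have hq : 1 < p ^ d := Nat.one_lt_pow hd hp
  let W : Set (Multiset ℕ) := {s | (∀ k ∈ s, k ∈ S) ∧ (s.map (· ^ d)).sum = n}
  have hW (s : Multiset ℕ) : glaisherSplit p (p ^ d) s ∈ W ↔ s ∈ W := by
    simp [W, mem_glaisherSplit (by lia : p ^ d ≠ 0), divMaxPow_mem_iff hS,
      sum_map_pow_glaisherSplit]
  convert (bijOn_glaisherSplit hp hq).inter_mapsTo (s₂ := W) (t₂ := W)
    (fun s ↦ (hW s).2) (fun s hs ↦ (hW s).1 hs.2) using 1
  · ext s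
    simp only [W, Set.mem_inter_iff, Set.mem_ofPred_eq]
    grind
  · ext t
    simp only [W, Set.mem_inter_iff, Set.mem_ofPred_eq]
    grind

theorem stmt4_general {d p : ℕ} (hd : d ≠ 0) (hp : 1 < p) {S : Set ℕ} (hS₀ : 0 ∉ S)
    (hS : ∀ k, p * k ∈ S ↔ k ∈ S) (n : ℕ) :
    Nat.card {s : Multiset ℕ // (∀ k ∈ s, k ∈ S ∧ ¬ p ∣ k) ∧ (s.map (· ^ d)).sum = n} =
      Nat.card {s : Multiset ℕ //
        (∀ k ∈ s, k ∈ S) ∧ (∀ k, s.count k < p ^ d) ∧ (s.map (· ^ d)).sum = n} :=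
  (Nat.card_congr (bijOn_glaisherSplit_pow hd hp hS₀ hS n).equiv).symm

theorem stmt4 (d p₂ : ℕ) (hd : 0 < d) (hp₂ : 3 ≤ p₂) (hodd : Odd p₂) (n : ℕ) :
    A d 2 p₂ n = D d p₂ n := by
  have hS (k : ℕ) : p₂ * k ∈ {k | 0 < k ∧ Odd k} ↔ k ∈ {k | 0 < k ∧ Odd k} := by
    simp [Nat.odd_mul, hodd, hodd.pos]
  simpa [A, D, and_assoc, ← even_iff_two_dvd, Nat.le_sub_one_iff_lt (pow_pos hodd.pos d)] using
    stmt4_general hd.ne' (by lia) (by simp) hS n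
end
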